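/- arXiv:1108.0217 — 4 statements merged into one kernel-verified Lean document; each statement's English description precedes it below -/
import Mathlib

section
/- Let μ : ℝ → ℝ and ε : ℝ → ℝ be continuous, let t₀ < t₁ be reals with ∫_{t₀}^{t₁} ε(s) ds = π/2. Suppose u, v : ℝ → ℝ are differentiable and satisfy u'(t) = −μ(t)·u(t) + ε(t)·v(t) and v'(t) = −μ(t)·v(t) − ε(t)·u(t) for all t ∈ [t₀, t₁], and v(t₀) = 0. Then u(t₁) = 0 and v(t₁) = −exp(−∫_{t₀}^{t₁} μ(s) ds)·u(t₀). -/
open intervalIntegral Real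

/-!
With `z = u + i v` the system reads `z' = -(μ + i ε) z`, so `exp (M + i Θ) * z` is constant on
`[t₀, t₁]`, where `M` and `Θ` are the primitives of `μ` and `ε` vanishing at `t₀`. The real and
imaginary parts of this constant are `exp M * (u cos Θ - v sin Θ)` and
`exp M * (u sin Θ + v cos Θ)`. Comparing their values at `t₀` (where `M = Θ = 0`) and at `t₁`
(where `Θ = π / 2`) gives the two claims.
-/

/-- A function with zero derivative on `[a, b]` takes the same value at both endpoints. -/
lemma endpoint_eq_of_hasDerivAt_zero {f : ℝ → ℝ} {a b : ℝ} (hab : a ≤ b)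
    (hf : ∀ t ∈ Set.Icc a b, HasDerivAt f 0 t) : f b = f a :=
  constant_of_has_deriv_right_zero
    (fun t ht => (hf t ht).continuousAt.continuousWithinAt)
    (fun t ht => (hf t (Set.Ico_subset_Icc_self ht)).hasDerivWithinAt)
    b (Set.right_mem_Icc.mpr hab)

/-- The quarter-rotation property from the proof of Proposition 2.1: if the total
phase `∫_{t₀}^{t₁} ε` equals `π/2`, then the solution operator of the planar system
`u' = -μ(t)u + ε(t)v`, `v' = -μ(t)v - ε(t)u` sends the first coordinate axis to the
second one, multiplied by the decay factor `exp(-∫_{t₀}^{t₁} μ)`. -/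
theorem stmt_5 (μ ε : ℝ → ℝ) (hμ : Continuous μ) (hε : Continuous ε)
    (t₀ t₁ : ℝ) (ht : t₀ < t₁)
    (hphase : (∫ s in t₀..t₁, ε s) = Real.pi / 2)
    (u v : ℝ → ℝ)
    (hu : ∀ t ∈ Set.Icc t₀ t₁, HasDerivAt u (-μ t * u t + ε t * v t) t)
    (hv : ∀ t ∈ Set.Icc t₀ t₁, HasDerivAt v (-μ t * v t - ε t * u t) t)
    (hv0 : v t₀ = 0) :
    u t₁ = 0 ∧ v t₁ = -Real.exp (-(∫ s in t₀..t₁, μ s)) * u t₀ := by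
  set M : ℝ → ℝ := fun t => ∫ s in t₀..t, μ s with hM
  set Θ : ℝ → ℝ := fun t => ∫ s in t₀..t, ε s with hΘ
  have dM (t : ℝ) : HasDerivAt M (μ t) t := (hμ.integral_hasStrictDerivAt t₀ t).hasDerivAt
  have dΘ (t : ℝ) : HasDerivAt Θ (ε t) t := (hε.integral_hasStrictDerivAt t₀ t).hasDerivAt
  have hM0 : M t₀ = 0 := intervalIntegral.integral_same
  have hΘ0 : Θ t₀ = 0 := intervalIntegral.integral_same
  have hΘ1 : Θ t₁ = Real.pi / 2 := hphase
  have hA := endpoint_eq_of_hasDerivAt_zero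
    (f := fun t => Real.exp (M t) * (u t * Real.cos (Θ t) - v t * Real.sin (Θ t))) ht.le
    (fun t h => ((dM t).exp.mul (((hu t h).mul (dΘ t).cos).sub
      ((hv t h).mul (dΘ t).sin))).congr_deriv (by simp only [Pi.sub_apply, Pi.mul_apply]; ring))
  have hB := endpoint_eq_of_hasDerivAt_zero
    (f := fun t => Real.exp (M t) * (u t * Real.sin (Θ t) + v t * Real.cos (Θ t))) ht.le
    (fun t h => ((dM t).exp.mul (((hu t h).mul (dΘ t).sin).add
      ((hv t h).mul (dΘ t).cos))).congr_deriv (by simp only [Pi.add_apply, Pi.mul_apply]; ring))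
  simp only [hM0, hΘ0, hΘ1, hv0, Real.cos_pi_div_two, Real.sin_pi_div_two, Real.exp_zero,
    Real.cos_zero, Real.sin_zero, mul_zero, mul_one, zero_mul, one_mul, zero_sub, sub_zero,
    add_zero] at hA hB
  refine ⟨(mul_eq_zero.mp hB).resolve_left (Real.exp_ne_zero _), ?_⟩
  change v t₁ = -Real.exp (-M t₁) * u t₀
  rw [← hA, Real.exp_neg]
  field_simp
end

section
/- Let (X, d) be a compact metric space, let N be a positive integer, and let C ≥ 1, γ > 0. Suppose there exist finitely many open sets U₁, …, U_m covering X and injective maps T_i : U_i → ℝ^N (ℝ^N with the Euclidean norm) such that for every i and all distinct x, y ∈ U_i one has ‖T_i x − T_i y‖ ≤ C·d(x,y)·(1 + |log d(x,y)|)^γ and d(x,y) ≤ C·‖T_i x − T_i y‖·(1 + |log ‖T_i x − T_i y‖|)^γ. Then there exist K > 0 and ε₀ ∈ (0,1) such that for every ε ∈ (0, ε₀) and every x ∈ X there is a finite set S ⊆ X of cardinality at most (log(1/ε))^K with {y ∈ X : d(y,x) ≤ ε} ⊆ ⋃_{z∈S} {y ∈ X : d(y,z) ≤ ε/2}. -/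
/-!
The cover has a Lebesgue number, so a small ball `closedBall x ε` lies in a single chart domain.
Choose in it a finite set `S` of maximal cardinality whose points are more than `ε / 2` apart;
by maximality the balls of radius `ε / 2` around `S` cover `closedBall x ε`, so only the
cardinality of such sets has to be bounded (`exists_cover_of_card_le`).

Write `L = log (1 / ε)`. Distances within `S` lie in `(ε / 2, 2 ε]`, so the upper chart estimate
puts the image of `S` in a Euclidean ball of radius `O(ε L ^ γ)`. The lower estimate separates the
image points by a multiple of `ε / L ^ γ`, provided that `|log ρ| = O(L)` for the image distance
`ρ`. This holds because `C t (1 + |log t|) ^ γ ≤ √t / 2` for small `t`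
(`exists_logLip_modulus_le_sqrt`): applied to the lower estimate, the crude bound gives
`ρ > ε ^ 2`. A volume comparison in `ℝᴺ` (`card_le_of_separated_of_mem_closedBall`) then bounds
the number of points by `O(L ^ (2 γ)) ^ N ≤ L ^ ((1 + 2 γ) N)`.
-/

open Metric Real

/-- Volume packing bound: the balls of radius `r / 2` around the points of `s` are disjoint and lie
in the ball of radius `R + r / 2` around `p`. -/
lemma card_le_of_separated_of_mem_closedBall {E : Type*} [NormedAddCommGroup E]
    [NormedSpace ℝ E] [FiniteDimensional ℝ E] (s : Finset E) (p : E) {R r : ℝ}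
    (hR : 0 ≤ R) (hr : 0 < r) (hs : ∀ c ∈ s, dist c p ≤ R)
    (h : ∀ c ∈ s, ∀ d ∈ s, c ≠ d → r ≤ dist c d) :
    (s.card : ℝ) ≤ (1 + 2 * R / r) ^ Module.finrank ℝ E := by
  borelize E
  let μ : MeasureTheory.Measure E := MeasureTheory.Measure.addHaar
  have hδ : 0 < r / 2 := by positivity
  have hρ : 0 < R + r / 2 := by positivity
  have D : Set.Pairwise (s : Set E) (Function.onFun Disjoint fun c => ball (c : E) (r / 2)) := by
    rintro c hc d hd hcd
    apply ball_disjoint_ball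
    linarith [h c hc d hd hcd]
  have A_subset : (⋃ c ∈ s, ball (c : E) (r / 2)) ⊆ ball p (R + r / 2) := by
    refine Set.iUnion₂_subset fun x hx => ball_subset_ball' ?_
    linarith [hs x hx]
  have I : (s.card : ENNReal) * ENNReal.ofReal ((r / 2) ^ Module.finrank ℝ E) * μ (ball 0 1) ≤
      ENNReal.ofReal ((R + r / 2) ^ Module.finrank ℝ E) * μ (ball 0 1) :=
    calc
      _ = μ (⋃ c ∈ s, ball (c : E) (r / 2)) := by
        rw [MeasureTheory.measure_biUnion_finset D fun c _ => measurableSet_ball]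
        simp only [μ.addHaar_ball_of_pos _ hδ, Finset.sum_const, nsmul_eq_mul, mul_assoc]
      _ ≤ μ (ball p (R + r / 2)) := MeasureTheory.measure_mono A_subset
      _ = _ := by simp only [μ.addHaar_ball_of_pos _ hρ]
  have J := (ENNReal.mul_le_mul_iff_left
    (measure_ball_pos μ (0 : E) zero_lt_one).ne' MeasureTheory.measure_ball_lt_top.ne).1 I
  have K := ENNReal.toReal_le_of_le_ofReal (pow_nonneg hρ.le _) J
  rw [ENNReal.toReal_mul, ENNReal.toReal_natCast, ENNReal.toReal_ofReal (by positivity)] at K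
  have e : 1 + 2 * R / r = (R + r / 2) / (r / 2) := by field_simp; ring
  rw [e, div_pow, le_div_iff₀ (by positivity)]
  exact K

/-- If all finite `δ`-separated subsets of `A` have at most `M` elements, then one of them, of
maximal cardinality, is a `δ`-net of `A`. -/
lemma exists_cover_of_card_le {X : Type*} [MetricSpace X] (A : Set X) {δ M : ℝ} (hδ : 0 ≤ δ)
    (h : ∀ S : Finset X, (S : Set X) ⊆ A → (∀ y ∈ S, ∀ z ∈ S, y ≠ z → δ < dist y z) →
      (S.card : ℝ) ≤ M) :
    ∃ S : Finset X, (S.card : ℝ) ≤ M ∧ A ⊆ ⋃ z ∈ S, closedBall z δ := by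
  classical
  let P : ℕ → Prop := fun n => ∃ S : Finset X, (S : Set X) ⊆ A ∧
    (∀ y ∈ S, ∀ z ∈ S, y ≠ z → δ < dist y z) ∧ S.card = n
  have hP0 : P 0 := ⟨∅, by simp, by simp, rfl⟩
  obtain ⟨S, hSA, hS, hcard⟩ := Nat.findGreatest_spec (Nat.zero_le ⌊M⌋₊) hP0
  refine ⟨S, h S hSA hS, fun y hy => ?_⟩
  by_contra hcon
  simp only [Set.mem_iUnion, mem_closedBall, not_exists, not_le] at hcon
  have hyS : y ∉ S := fun hyS => by
    have := hcon y hyS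
    rw [dist_self] at this
    linarith
  have hA' : ((insert y S : Finset X) : Set X) ⊆ A := by
    rw [Finset.coe_insert]
    exact Set.insert_subset hy hSA
  have hS' : ∀ a ∈ insert y S, ∀ b ∈ insert y S, a ≠ b → δ < dist a b := by
    intro a ha b hb hab
    rcases Finset.mem_insert.1 ha with hay | ha <;> rcases Finset.mem_insert.1 hb with hby | hb
    · exact absurd (hay.trans hby.symm) hab
    · rw [hay]; exact hcon b hb
    · rw [hby, dist_comm]; exact hcon a ha
    · exact hS a ha b hb hab
  have h1 : (insert y S).card ≤ Nat.findGreatest P ⌊M⌋₊ :=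
    Nat.le_findGreatest (Nat.le_floor (h _ hA' hS')) ⟨_, hA', hS', rfl⟩
  rw [Finset.card_insert_of_notMem hyS] at h1
  omega

/-- Near `0` the logarithmic factor costs less than any power; half a power suffices here. -/
lemma exists_logLip_modulus_le_sqrt {C γ : ℝ} (hC : 1 ≤ C) (hγ : 0 < γ) :
    ∃ t₀ : ℝ, 0 < t₀ ∧ t₀ ≤ 1 ∧
      ∀ t : ℝ, 0 < t → t < t₀ → C * t * (1 + |Real.log t|) ^ γ ≤ √t / 2 := by
  have hr : 0 < 1 / (2 * γ) := by positivity
  have h1 : Filter.Tendsto (fun t : ℝ => t ^ (1 / (2 * γ))) (nhdsWithin 0 (Set.Ioi 0)) (nhds 0) := by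
    have := (Real.continuousAt_rpow_const 0 (1 / (2 * γ)) (Or.inr hr.le)).tendsto
    rw [Real.zero_rpow hr.ne'] at this
    exact this.mono_left nhdsWithin_le_nhds
  have h2 := (h1.add (tendsto_log_mul_rpow_nhdsGT_zero hr).abs).rpow_const (p := γ) (Or.inr hγ.le)
  rw [abs_zero, add_zero, Real.zero_rpow hγ.ne'] at h2
  have h3 := h2.eventually (ge_mem_nhds (show (0 : ℝ) < 1 / (2 * C) by positivity))
  obtain ⟨u, hu, h4⟩ := (mem_nhdsGT_iff_exists_Ioo_subset).1 h3
  refine ⟨min u 1, lt_min hu one_pos, min_le_right _ _, fun t ht htu => ?_⟩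
  have h5 : (t ^ (1 / (2 * γ)) + |Real.log t * t ^ (1 / (2 * γ))|) ^ γ ≤ 1 / (2 * C) :=
    h4 ⟨ht, htu.trans_le (min_le_left _ _)⟩
  have e : (t ^ (1 / (2 * γ)) + |Real.log t * t ^ (1 / (2 * γ))|) ^ γ
      = √t * (1 + |Real.log t|) ^ γ := by
    rw [abs_mul, abs_of_pos (Real.rpow_pos_of_pos ht (1 / (2 * γ))),
      show t ^ (1 / (2 * γ)) + |Real.log t| * t ^ (1 / (2 * γ))
        = t ^ (1 / (2 * γ)) * (1 + |Real.log t|) by ring,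
      Real.mul_rpow (by positivity) (by positivity), ← Real.rpow_mul ht.le, Real.sqrt_eq_rpow]
    congr 2
    field_simp
  rw [e, le_div_iff₀ (by positivity)] at h5
  have hs := Real.mul_self_sqrt ht.le
  have h6 := mul_le_mul_of_nonneg_left h5 (Real.sqrt_nonneg t)
  have h7 : √t * (√t * (1 + |Real.log t|) ^ γ * (2 * C))
      = 2 * (C * t * (1 + |Real.log t|) ^ γ) := by
    rw [show √t * (√t * (1 + |Real.log t|) ^ γ * (2 * C))
      = (√t * √t) * (1 + |Real.log t|) ^ γ * (2 * C) by ring, hs]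
    ring
  linarith

/-- The estimate inside one chart: an `ε / 2`-separated set of diameter at most `2 ε` has at most
`(9 C² (3 L) ^ (2 γ)) ^ N` points, where `L = log (1 / ε)`. -/
lemma card_le_of_logLip_chart {X : Type*} [MetricSpace X] {N : ℕ} {C γ t₀ ε : ℝ} (hC : 1 ≤ C)
    (hγ : 0 < γ) (T : X → EuclideanSpace ℝ (Fin N)) (S : Finset X)
    (hupper : ∀ x ∈ S, ∀ y ∈ S, x ≠ y →
      ‖T x - T y‖ ≤ C * dist x y * (1 + |Real.log (dist x y)|) ^ γ)
    (hlower : ∀ x ∈ S, ∀ y ∈ S, x ≠ y →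
      dist x y ≤ C * ‖T x - T y‖ * (1 + |Real.log ‖T x - T y‖|) ^ γ)
    (ht₀ : 0 < t₀) (ht₁ : t₀ ≤ 1)
    (hmod : ∀ t : ℝ, 0 < t → t < t₀ → C * t * (1 + |Real.log t|) ^ γ ≤ √t / 2)
    (hε : 0 < ε) (hεt : 2 * ε < t₀ ^ 2) (hL : 2 ≤ Real.log (1 / ε))
    (hsep : ∀ x ∈ S, ∀ y ∈ S, x ≠ y → ε / 2 < dist x y)
    (hdiam : ∀ x ∈ S, ∀ y ∈ S, dist x y ≤ 2 * ε) :
    (S.card : ℝ) ≤ (9 * C ^ 2 * ((3 * Real.log (1 / ε)) ^ γ) ^ 2) ^ N := by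
  classical
  set L := Real.log (1 / ε) with hLdef
  have hlogε : Real.log ε = -L := by rw [hLdef, one_div, Real.log_inv, neg_neg]
  set P := (3 * L) ^ γ with hPdef
  have hP1 : 1 ≤ P := Real.one_le_rpow (by linarith) hγ.le
  have ht2 : t₀ ^ 2 ≤ t₀ := by nlinarith
  have hlog2 : Real.log 2 < 1 := by linarith [Real.log_two_lt_d9]
  have hup : ∀ x ∈ S, ∀ y ∈ S, x ≠ y → ‖T x - T y‖ ≤ 2 * C * ε * P := by
    intro x hx y hy hxy
    have hd1 := hsep x hx y hy hxy
    have hd2 := hdiam x hx y hy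
    have hd0 : 0 < dist x y := dist_pos.2 hxy
    have hl : |Real.log (dist x y)| ≤ L + 1 := by
      rw [abs_of_nonpos (Real.log_nonpos hd0.le (by linarith))]
      have := Real.log_le_log (by positivity) hd1.le
      rw [Real.log_div hε.ne' two_ne_zero, hlogε] at this
      linarith
    calc _ ≤ C * dist x y * (1 + |Real.log (dist x y)|) ^ γ := hupper x hx y hy hxy
      _ ≤ C * (2 * ε) * P := by
        gcongr
        rw [hPdef]
        gcongr
        linarith
      _ = _ := by ring
  have hlo : ∀ x ∈ S, ∀ y ∈ S, x ≠ y → ε / (2 * C * P) ≤ ‖T x - T y‖ := by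
    intro x hx y hy hxy
    have hd1 := hsep x hx y hy hxy
    have hd2 := hdiam x hx y hy
    have hd0 : 0 < dist x y := dist_pos.2 hxy
    have hu := hupper x hx y hy hxy
    have hl := hlower x hx y hy hxy
    set ρ := ‖T x - T y‖ with hρdef
    have hρ0 : 0 < ρ := by
      rcases (norm_nonneg (T x - T y)).eq_or_lt with h | h
      · rw [hρdef, ← h] at hl
        simp at hl
        exact absurd hl hxy
      · exact h
    have hρt : ρ < t₀ := by
      have h1 := hmod _ hd0 (by linarith)
      have h2 : √(dist x y) ≤ t₀ := Real.sqrt_le_iff.2 ⟨ht₀.le, by linarith⟩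
      linarith
    have hρε : ε ^ 2 < ρ := by
      have h1 := hmod ρ hρ0 hρt
      exact (Real.lt_sqrt hε.le).1 (by linarith)
    have hlog : |Real.log ρ| ≤ 2 * L := by
      rw [abs_of_nonpos (Real.log_nonpos hρ0.le (by linarith))]
      have := Real.log_le_log (by positivity) hρε.le
      rw [Real.log_pow, hlogε] at this
      push_cast at this
      linarith
    have h3 : (1 + |Real.log ρ|) ^ γ ≤ P := by
      rw [hPdef]
      gcongr
      linarith
    have h4 : C * ρ * (1 + |Real.log ρ|) ^ γ ≤ C * ρ * P := by gcongr
    rw [div_le_iff₀ (by positivity)]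
    nlinarith
  have hr : 0 < ε / (2 * C * P) := by positivity
  have hinj : Set.InjOn T S := by
    intro x hx y hy hxy
    by_contra hne
    have := hlo x hx y hy hne
    rw [hxy, sub_self, norm_zero] at this
    linarith
  rcases S.eq_empty_or_nonempty with rfl | ⟨p, hp⟩
  · simp only [Finset.card_empty, Nat.cast_zero]
    positivity
  have key := card_le_of_separated_of_mem_closedBall (S.image T) (T p)
    (R := 2 * C * ε * P) (by positivity) hr ?_ ?_
  · rw [Finset.card_image_of_injOn hinj, finrank_euclideanSpace_fin] at key
    refine key.trans (pow_le_pow_left₀ (by positivity) ?_ _)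
    have e : 2 * (2 * C * ε * P) / (ε / (2 * C * P)) = 8 * (C * P) ^ 2 := by
      field_simp
      ring
    have hCP : 1 ≤ C * P := one_le_mul_of_one_le_of_one_le hC hP1
    rw [e]
    nlinarith
  · intro c hc
    obtain ⟨x, hx, rfl⟩ := Finset.mem_image.1 hc
    rw [dist_eq_norm]
    by_cases h : x = p
    · rw [h, sub_self, norm_zero]
      positivity
    · exact hup x hx p hp h
  · intro c hc d hd hcd
    obtain ⟨x, hx, rfl⟩ := Finset.mem_image.1 hc
    obtain ⟨y, hy, rfl⟩ := Finset.mem_image.1 hd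
    rw [dist_eq_norm]
    exact hlo x hx y hy fun h => hcd (by rw [h])

/-- Lemma 3.2: if a compact metric space `X` is embedded into a finite-dimensional
log-Lipschitz manifold (i.e. admits a finite open cover with bi-log-Lipschitz charts
into `ℝᴺ`), then its doubling factor grows at most polylogarithmically: every
`ε`-ball of `X` can be covered by at most `(log(1/ε))^K` balls of radius `ε/2`. -/
theorem stmt_9 (X : Type*) [MetricSpace X] [CompactSpace X]
    (N : ℕ) (hN : 0 < N) (C γ : ℝ) (hC : 1 ≤ C) (hγ : 0 < γ)
    (m : ℕ) (U : Fin m → Set X) (hUopen : ∀ i, IsOpen (U i))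
    (hUcover : (⋃ i, U i) = Set.univ)
    (Tm : Fin m → X → EuclideanSpace ℝ (Fin N))
    (hinj : ∀ i, Set.InjOn (Tm i) (U i))
    (hupper : ∀ i, ∀ x ∈ U i, ∀ y ∈ U i, x ≠ y →
      ‖Tm i x - Tm i y‖ ≤ C * dist x y * (1 + |Real.log (dist x y)|) ^ γ)
    (hlower : ∀ i, ∀ x ∈ U i, ∀ y ∈ U i, x ≠ y →
      dist x y ≤ C * ‖Tm i x - Tm i y‖ *
        (1 + |Real.log ‖Tm i x - Tm i y‖|) ^ γ) :
    ∃ K : ℝ, 0 < K ∧ ∃ ε₀ : ℝ, 0 < ε₀ ∧ ε₀ < 1 ∧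
      ∀ ε : ℝ, 0 < ε → ε < ε₀ → ∀ x : X,
        ∃ S : Finset X, (S.card : ℝ) ≤ (Real.log (1 / ε)) ^ K ∧
          Metric.closedBall x ε ⊆ ⋃ z ∈ S, Metric.closedBall z (ε / 2) := by
  obtain ⟨δ, hδ, hball⟩ := lebesgue_number_lemma_of_metric isCompact_univ hUopen hUcover.ge
  obtain ⟨t₀, ht₀, ht₁, hmod⟩ := exists_logLip_modulus_le_sqrt hC hγ
  -- `B` is the constant in front of `L ^ (2 γ)`; it is absorbed by one more factor `L ≥ B`.
  set B : ℝ := 9 * C ^ 2 * (3 ^ γ) ^ 2 with hB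
  set M : ℝ := max 2 B with hM
  have hN' : (0 : ℝ) < N := by exact_mod_cast hN
  refine ⟨(1 + 2 * γ) * N, by positivity, min (min δ (t₀ ^ 2 / 2)) (Real.exp (-M)),
    by positivity, ?_, ?_⟩
  · refine (min_le_right _ _).trans_lt (Real.exp_lt_one_iff.2 ?_)
    linarith [le_max_left 2 B]
  intro ε hε hεlt x
  simp only [lt_min_iff] at hεlt
  obtain ⟨⟨hεδ, hεt⟩, hεM⟩ := hεlt
  have hLM : M ≤ Real.log (1 / ε) := by
    have := Real.log_lt_log hε hεM
    rw [Real.log_exp] at this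
    rw [one_div, Real.log_inv]
    linarith
  have hL2 := (le_max_left 2 B).trans hLM
  have hLB := (le_max_right 2 B).trans hLM
  obtain ⟨i, hi⟩ := hball x (Set.mem_univ x)
  have hsub : closedBall x ε ⊆ U i := (closedBall_subset_ball hεδ).trans hi
  refine exists_cover_of_card_le _ (by positivity)
    fun S hSA hS => ?_
  refine (card_le_of_logLip_chart hC hγ (Tm i) S
    (fun a ha b hb => hupper i a (hsub (hSA ha)) b (hsub (hSA hb)))
    (fun a ha b hb => hlower i a (hsub (hSA ha)) b (hsub (hSA hb)))
    ht₀ ht₁ hmod hε (by linarith) hL2 hS ?_).trans ?_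
  · intro a ha b hb
    have h1 := mem_closedBall.1 (hSA ha)
    have h2 := mem_closedBall.1 (hSA hb)
    linarith [dist_triangle_right a b x]
  · set L := Real.log (1 / ε)
    have hL0 : 0 < L := by linarith
    rw [Real.rpow_mul hL0.le, Real.rpow_natCast]
    refine pow_le_pow_left₀ (by positivity) ?_ _
    have e : L ^ (2 * γ) = (L ^ γ) ^ 2 := by
      rw [mul_comm, Real.rpow_mul hL0.le, Real.rpow_two]
    rw [Real.mul_rpow (by norm_num) hL0.le, Real.rpow_add hL0, Real.rpow_one, e]
    calc 9 * C ^ 2 * (3 ^ γ * L ^ γ) ^ 2 = B * (L ^ γ) ^ 2 := by rw [hB]; ring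
      _ ≤ L * (L ^ γ) ^ 2 := by gcongr
end

section
/- Let ℓ² denote the real Hilbert space of square-summable real sequences indexed by the natural numbers, with standard orthonormal basis (e_n). Let S := { (log(n+2))^{−3}·e_n : n ∈ ℕ } ⊆ ℓ². Then for every K > 0 there exists ε₀ > 0 such that for every ε ∈ (0, ε₀), every finite family of open balls of radius ε in ℓ² whose union contains S has cardinality greater than (1/ε)^K. In particular the fractal (box-counting) dimension of S, defined as limsup_{ε→0} log N_ε(S) / log(1/ε) where N_ε(S) is the minimal number of ε-balls covering S, is infinite. -/
/-!
Write `a n = (log (n + 2))⁻³`. Two distinct points `a n • e n` and `a m • e m` are at distance at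
least `a n`, as their difference has `n`-th coordinate `a n`. Hence an open `ε`-ball contains at most
one of the first `M` points as soon as `a n ≥ 2 ε` for all `n < M`, i.e. `2 (log (M + 1))³ ≤ 1 / ε`,
and then a cover needs at least `M` balls (`card_ge_of_cover`). With `M = ⌊(1 / ε) ^ K⌋ + 1`,
`log (M + 1)` is `O(log (1 / ε))`, so the requirement holds for all small `ε`
(`exists_log_cube_le`), because powers of `log` are negligible against the identity.
-/

open Metric

/-- With `t = 1 / ε`, this says that the first `⌊t ^ K⌋ + 1` points are `2 ε`-separated once `t`
is large. -/
lemma exists_log_cube_le (K : ℝ) (hK : 0 < K) :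
    ∃ T : ℝ, 2 ≤ T ∧ ∀ t : ℝ, T ≤ t → 2 * Real.log (t ^ K + 2) ^ 3 ≤ t := by
  have ho := (Real.isLittleO_pow_log_id_atTop (n := 3)).bound
    (show (0 : ℝ) < (2 * (K + 2) ^ 3)⁻¹ by positivity)
  obtain ⟨T, hT⟩ := Filter.eventually_atTop.1 ho
  refine ⟨max T 2, le_max_right _ _, fun t ht => ?_⟩
  have h2 : 2 ≤ t := (le_max_right _ _).trans ht
  have h := hT t ((le_max_left _ _).trans ht)
  have hlog : 0 ≤ Real.log t := Real.log_nonneg (by linarith)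
  rw [Real.norm_of_nonneg (by positivity), id, Real.norm_of_nonneg (by linarith),
    inv_mul_eq_div, le_div_iff₀ (by positivity)] at h
  have h1 : 1 ≤ t ^ K := Real.one_le_rpow (by linarith) hK.le
  have hle : t ^ K + 2 ≤ t ^ (K + 2) := by
    rw [Real.rpow_add (by linarith), Real.rpow_two]
    have h4 : 4 ≤ t ^ 2 := by nlinarith
    have h5 : t ^ K * 4 ≤ t ^ K * t ^ 2 := by gcongr
    linarith
  have hlog' : Real.log (t ^ K + 2) ≤ (K + 2) * Real.log t := by
    rw [← Real.log_rpow (by linarith)]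
    exact Real.log_le_log (by linarith) hle
  have h0 : 0 ≤ Real.log (t ^ K + 2) := Real.log_nonneg (by linarith)
  calc 2 * Real.log (t ^ K + 2) ^ 3 ≤ 2 * ((K + 2) * Real.log t) ^ 3 := by gcongr
    _ = Real.log t ^ 3 * (2 * (K + 2) ^ 3) := by ring
    _ ≤ t := h

lemma le_dist_smul_single (a b : ℝ) {n m : ℕ} (h : n ≠ m) :
    a ≤ dist (a • lp.single (E := fun _ : ℕ => ℝ) 2 n (1 : ℝ))
      (b • lp.single (E := fun _ : ℕ => ℝ) 2 m (1 : ℝ)) := by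
  rw [dist_eq_norm]
  refine le_trans ?_ (lp.norm_apply_le_norm (by norm_num) _ n)
  rw [lp.coeFn_sub, Pi.sub_apply, lp.coeFn_smul, lp.coeFn_smul, Pi.smul_apply, Pi.smul_apply,
    lp.single_apply_self, lp.single_apply_ne 2 m _ h]
  simp [le_abs_self]

/-- If the first `M` points `a n • e n` have `2 ε ≤ a n`, sending each to the centre of a ball
containing it is injective. -/
lemma card_ge_of_cover (a : ℕ → ℝ) (ε : ℝ) (M : ℕ) (ha : ∀ n < M, 2 * ε ≤ a n)
    (balls : Finset (lp (fun _ : ℕ => ℝ) 2))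
    (hc : ∀ n, ∃ c ∈ balls, a n • lp.single (E := fun _ : ℕ => ℝ) 2 n (1 : ℝ) ∈ ball c ε) :
    M ≤ balls.card := by
  choose c hcb hcd using hc
  rw [← Finset.card_range M]
  refine Finset.card_le_card_of_injOn c (fun n _ => hcb n) ?_
  intro n hn m _ hnm
  by_contra hne
  have hn' : n < M := by simpa using hn
  have h1 := mem_ball.1 (hcd n)
  have h2 := mem_ball.1 (hcd m)
  rw [← hnm] at h2
  have h3 := dist_triangle_right (a n • lp.single (E := fun _ : ℕ => ℝ) 2 n (1 : ℝ))
    (a m • lp.single (E := fun _ : ℕ => ℝ) 2 m (1 : ℝ)) (c n)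
  linarith [le_dist_smul_single (a n) (a m) hne, ha n hn']

/-- The computation (4.18): the set `S = {(log(n+2))⁻³ e_n : n ∈ ℕ}` along an
orthonormal basis of `ℓ²` has infinite fractal (box-counting) dimension: for every
`K`, any cover of `S` by open `ε`-balls with `ε` small needs more than `(1/ε)^K`
balls; in particular `limsup_{ε→0} log N_ε(S)/log(1/ε) = ∞`. -/
theorem stmt_16 :
    ∀ K : ℝ, 0 < K → ∃ ε₀ : ℝ, 0 < ε₀ ∧
      ∀ ε : ℝ, 0 < ε → ε < ε₀ →
        ∀ balls : Finset (lp (fun _ : ℕ => ℝ) 2),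
          ({x : lp (fun _ : ℕ => ℝ) 2 |
              ∃ n : ℕ, x = ((Real.log ((n : ℝ) + 2)) ^ 3)⁻¹ • lp.single 2 n (1 : ℝ)}
            ⊆ ⋃ c ∈ balls, Metric.ball c ε) →
          (1 / ε) ^ K < (balls.card : ℝ) ∧
          ∀ d : ℝ, d ≤ K → d < Real.log (balls.card) / Real.log (1 / ε) := by
  intro K hK
  obtain ⟨T, hT2, hT⟩ := exists_log_cube_le K hK
  refine ⟨1 / T, by positivity, fun ε hε hεT balls hcov => ?_⟩
  have hTt : T ≤ 1 / ε := (le_one_div (by linarith) hε).2 hεT.le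
  have hKt : 0 ≤ (1 / ε) ^ K := by positivity
  have hcard : ⌊(1 / ε) ^ K⌋₊ + 1 ≤ balls.card := by
    refine card_ge_of_cover (fun n => ((Real.log ((n : ℝ) + 2)) ^ 3)⁻¹) ε _ ?_ balls ?_
    · intro n hn
      have hn' : (n : ℝ) ≤ (1 / ε) ^ K := (Nat.le_floor_iff hKt).1 (Nat.lt_succ_iff.1 hn)
      have hn0 : (0 : ℝ) ≤ n := n.cast_nonneg
      have hpos : 0 < Real.log ((n : ℝ) + 2) := Real.log_pos (by linarith)
      have hle : Real.log ((n : ℝ) + 2) ≤ Real.log ((1 / ε) ^ K + 2) :=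
        Real.log_le_log (by linarith) (by linarith)
      have h3 : 2 * Real.log ((n : ℝ) + 2) ^ 3 ≤ 1 / ε :=
        le_trans (by gcongr) (hT _ hTt)
      rw [le_div_iff₀ hε] at h3
      rw [← one_div, le_div_iff₀ (by positivity)]
      linarith
    · intro n
      simpa only [Set.mem_iUnion, exists_prop] using hcov ⟨n, rfl⟩
  have hlt : (1 / ε) ^ K < (balls.card : ℝ) :=
    (Nat.lt_floor_add_one _).trans_le (by exact_mod_cast hcard)
  refine ⟨hlt, fun d hd => hd.trans_lt ?_⟩
  rw [lt_div_iff₀ (Real.log_pos (by linarith)), ← Real.log_rpow (by positivity)]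
  exact Real.log_lt_log (by positivity) hlt
end

section
/- Let k be a natural number and let (f_n)_{n∈ℕ} be a sequence of k-times continuously differentiable functions ℝ² → ℝ whose closed supports are pairwise disjoint. Assume that for every j ∈ {0, 1, …, k} and every n the supremum M_{n,j} := sup_{p∈ℝ²} ‖D^j f_n(p)‖ of the norm of the j-th iterated derivative is finite, and that M_{n,j} → 0 as n → ∞ for each j ≤ k. Then the map F : ℝ² → ℓ² defined componentwise by F(p)_n = f_n(p) takes values in ℓ² (the real Hilbert space of square-summable sequences) and is k-times continuously differentiable. -/
/-!
At each point at most one of the `f n` is nonzero, so the tail `∑_{n ≥ N} f n • e n` has norm at most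
`sup_{n ≥ N} sup_p |f n p|`, and the partial sums converge uniformly although the sup-norms need
not be summable. The derivatives `fderiv (f n)` again have pairwise disjoint closed supports and
decaying sup-norms, so the partial sums converge uniformly together with all derivatives of order
at most `k`. This is `tendstoUniformly_partialSum`; `contDiff_finsum_of_disjoint_tsupport` deduces
that the sum is `Cᵏ`, by induction on `k` over all target spaces at once. The theorem is the case
of the `ℓ²`-valued maps `p ↦ f n p • e n`.
-/

open Filter Topology

/-- Functions with pairwise disjoint supports: at each point there is an index outside of which
all functions of the sequence vanish. The index is arbitrary if every function vanishes there. -/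
lemma exists_forall_ne_eq_zero {E G : Type*} [TopologicalSpace E] [Zero G] {g : ℕ → E → G}
    (hsupp : ∀ m n : ℕ, m ≠ n → Disjoint (tsupport (g m)) (tsupport (g n))) (p : E) :
    ∃ i, ∀ n, n ≠ i → g n p = 0 := by
  by_cases h : ∃ i, g i p ≠ 0
  · obtain ⟨i, hi⟩ := h
    refine ⟨i, fun n hn => ?_⟩
    by_contra hne
    exact Set.disjoint_left.1 (hsupp n i hn) (subset_tsupport _ hne) (subset_tsupport _ hi)
  · push Not at h
    exact ⟨0, fun n _ => h n⟩

/-- The error of the `N`-th partial sum at `p` is either `0` or a single term of index `≥ N`, so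
uniform decay of the terms replaces the summability required by the Weierstrass test. -/
lemma tendstoUniformly_partialSum {E G : Type*} [TopologicalSpace E] [NormedAddCommGroup G]
    {g : ℕ → E → G}
    (hsupp : ∀ m n : ℕ, m ≠ n → Disjoint (tsupport (g m)) (tsupport (g n)))
    (hg : ∀ ε > 0, ∀ᶠ n in atTop, ∀ p, ‖g n p‖ < ε) :
    TendstoUniformly (fun N p => ∑ n ∈ Finset.range N, g n p) (fun p => ∑ᶠ n, g n p) atTop := by
  rw [Metric.tendstoUniformly_iff]
  intro ε hε
  obtain ⟨N₀, hN₀⟩ := eventually_atTop.1 (hg ε hε)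
  filter_upwards [eventually_ge_atTop N₀] with N hN p
  obtain ⟨i, hi⟩ := exists_forall_ne_eq_zero hsupp p
  rw [finsum_eq_single _ i hi]
  by_cases hiN : i < N
  · rw [Finset.sum_eq_single_of_mem i (Finset.mem_range.2 hiN) fun n _ hn => hi n hn]
    simpa using hε
  · rw [Finset.sum_eq_zero fun n hn => hi n (by have := Finset.mem_range.1 hn; omega)]
    simpa using hN₀ i (by omega) p

/-- The target space varies so that the induction on `k` can pass from `g n` to `fderiv ℝ (g n)`;
both spaces live in the same universe for that reason. -/
lemma contDiff_finsum_of_disjoint_tsupport.{u} {E : Type u} [NormedAddCommGroup E]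
    [NormedSpace ℝ E] (k : ℕ) :
    ∀ {G : Type u} [NormedAddCommGroup G] [NormedSpace ℝ G] {g : ℕ → E → G},
    (∀ n, ContDiff ℝ k (g n)) →
    (∀ m n : ℕ, m ≠ n → Disjoint (tsupport (g m)) (tsupport (g n))) →
    (∀ j ≤ k, ∀ ε > 0, ∀ᶠ n in atTop, ∀ p, ‖iteratedFDeriv ℝ j (g n) p‖ < ε) →
    ContDiff ℝ k (fun p => ∑ᶠ n, g n p) := by
  induction k with
  | zero =>
    intro G _ _ g hg hsupp hdecay
    have hg0 := tendstoUniformly_partialSum hsupp (by simpa using hdecay 0 le_rfl)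
    rw [Nat.cast_zero, contDiff_zero]
    exact hg0.continuous
      (Frequently.of_forall fun N => continuous_finsetSum _ fun n _ => (hg n).continuous)
  | succ k ih =>
    intro G _ _ g hg hsupp hdecay
    have hg0 := tendstoUniformly_partialSum hsupp (by simpa using hdecay 0 (Nat.zero_le _))
    have hsupp' : ∀ m n : ℕ, m ≠ n →
        Disjoint (tsupport (fderiv ℝ (g m))) (tsupport (fderiv ℝ (g n))) := fun m n hmn =>
      (hsupp m n hmn).mono (tsupport_fderiv_subset ℝ) (tsupport_fderiv_subset ℝ)
    have hdecay' : ∀ j ≤ k, ∀ ε > 0, ∀ᶠ n in atTop,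
        ∀ p, ‖iteratedFDeriv ℝ j (fderiv ℝ (g n)) p‖ < ε := by
      intro j hj ε hε
      simpa only [norm_iteratedFDeriv_fderiv] using hdecay (j + 1) (by omega) ε hε
    have hg1 := tendstoUniformly_partialSum hsupp' (by simpa using hdecay' 0 (Nat.zero_le _))
    have hderiv : ∀ p, HasFDerivAt (fun p => ∑ᶠ n, g n p) (∑ᶠ n, fderiv ℝ (g n) p) p := by
      refine hasFDerivAt_of_tendstoUniformly hg1 (fun N p => ?_) fun p => hg0.tendsto_at p
      exact HasFDerivAt.fun_sum fun n _ =>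
        ((hg n).differentiable (by simp) p).hasFDerivAt
    rw [Nat.cast_add_one]
    refine contDiff_succ_iff_hasFDerivAt.2 ⟨_, ih (fun n => ?_) hsupp' hdecay', hderiv⟩
    exact (hg n).fderiv_right (by simp)

/-- The isometric embedding of `ℝ` as the `n`-th coordinate axis of `ℓ²`. -/
noncomputable def coordIsometry (n : ℕ) : ℝ →ₗᵢ[ℝ] lp (fun _ : ℕ => ℝ) 2 where
  toLinearMap := lp.lsingle (𝕜 := ℝ) (E := fun _ : ℕ => ℝ) 2 n
  norm_map' x := lp.norm_single (E := fun _ : ℕ => ℝ) (by norm_num) n x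

/-- The mechanism behind part (1) of Lemma 4.1: a sequence of `Cᵏ` functions
`f_n : ℝ² → ℝ` with pairwise disjoint closed supports, all of whose derivative
sup-norms up to order `k` are finite and tend to `0`, assembles into a `Cᵏ` map
`F : ℝ² → ℓ²` with components `F(p)_n = f_n(p)`. -/
theorem stmt_17 (k : ℕ) (f : ℕ → (ℝ × ℝ) → ℝ)
    (hf : ∀ n, ContDiff ℝ k (f n))
    (hsupp : ∀ m n : ℕ, m ≠ n → Disjoint (tsupport (f m)) (tsupport (f n)))
    (hbdd : ∀ n : ℕ, ∀ j : ℕ, j ≤ k →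
      BddAbove (Set.range fun p : ℝ × ℝ => ‖iteratedFDeriv ℝ j (f n) p‖))
    (htend : ∀ j : ℕ, j ≤ k →
      Tendsto (fun n : ℕ => ⨆ p : ℝ × ℝ, ‖iteratedFDeriv ℝ j (f n) p‖)
        atTop (𝓝 0)) :
    (∀ p : ℝ × ℝ, Memℓp (fun n : ℕ => f n p) 2) ∧
    ∀ F : (ℝ × ℝ) → lp (fun _ : ℕ => ℝ) 2,
      (∀ p n, (F p : ℕ → ℝ) n = f n p) → ContDiff ℝ k F := by
  constructor
  · intro p
    obtain ⟨i, hi⟩ := exists_forall_ne_eq_zero hsupp p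
    refine (memℓp_zero ((Set.finite_singleton i).subset fun n hn => ?_)).of_exponent_ge zero_le
    by_contra hne
    exact hn (hi n hne)
  · intro F hF
    have hF' : F = fun p => ∑ᶠ n, (coordIsometry n ∘ f n) p := by
      funext p
      obtain ⟨i, hi⟩ := exists_forall_ne_eq_zero hsupp p
      rw [finsum_eq_single _ i fun n hn => by simp [hi n hn]]
      ext n
      rw [hF p n]
      by_cases hn : n = i
      · subst hn
        exact (lp.single_apply_self (E := fun _ : ℕ => ℝ) 2 n (f n p)).symm
      · rw [hi n hn]
        exact (lp.single_apply_ne (E := fun _ : ℕ => ℝ) 2 i (f i p) hn).symm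
    rw [hF']
    refine contDiff_finsum_of_disjoint_tsupport k
      (fun n => (coordIsometry n).contDiff.comp (hf n)) (fun m n hmn => ?_) fun j hj ε hε => ?_
    · exact (hsupp m n hmn).mono (closure_mono (Function.support_comp_subset (map_zero _) _))
        (closure_mono (Function.support_comp_subset (map_zero _) _))
    · filter_upwards [(htend j hj).eventually_lt_const hε] with n hn p
      rw [(coordIsometry n).norm_iteratedFDeriv_comp_left (hf n).contDiffAt (by exact_mod_cast hj)]
      exact (le_ciSup (hbdd n j hj) p).trans_lt hn
end
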